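/- Let (F_0, a) be initial data for the completion problem in ℂ^d with k < d (so d − rank(S_0) ≤ k < d), let λ = λ↑(S_0), and let λ′ = (λ_1,…,λ_k) ∈ ℝ^k. For strictly convex f : [0,∞) → [0,∞), let μ_f ∈ Γ_d(a) be the unique minimizer of γ ↦ Σ_{i=1}^d f(λ_i + γ_i) over Γ_d(a) and set ν_f(λ,a) = λ + μ_f; similarly let μ′_f ∈ Γ_k(a) be the unique minimizer of γ ↦ Σ_{i=1}^k f(λ′_i + γ_i) over Γ_k(a) and set ν_f(λ′,a) = λ′ + μ′_f. Then ν_f(λ,a) = (ν_f(λ′,a), λ_{k+1},…,λ_d). Moreover ν_f(λ,a) is the same vector for every strictly convex f, and its decreasing rearrangement is a minimum for majorization in Λ(C_a(F_0)) = {λ(S_F) : F ∈ C_a(F_0)}. -/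

import Mathlib

open Finset
open scoped ComplexOrder

noncomputable def sortAsc {m : ℕ} (x : Fin m → ℝ) : Fin m → ℝ :=
  x ∘ Tuple.sort x

noncomputable def sortDesc {m : ℕ} (x : Fin m → ℝ) : Fin m → ℝ :=
  fun i => (x ∘ Tuple.sort x) i.rev

noncomputable def pad {k : ℕ} (x : Fin k → ℝ) (m : ℕ) : Fin m → ℝ :=
  fun i => if h : (i : ℕ) < k then x ⟨i, h⟩ else 0

/-- `MajorizedBy x y` means `x ≺ y`. -/
def MajorizedBy {m : ℕ} (x y : Fin m → ℝ) : Prop :=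
  (∀ j : Fin m, ∑ i ∈ Finset.Iic j, sortDesc x i ≤ ∑ i ∈ Finset.Iic j, sortDesc y i) ∧
    ∑ i, x i = ∑ i, y i

/-- Majorization of vectors of possibly different lengths, padding with zeros. -/
def MajorizedByPad {k m : ℕ} (x : Fin k → ℝ) (y : Fin m → ℝ) : Prop :=
  MajorizedBy (pad x (max k m)) (pad y (max k m))

/-- The frame operator `S_F = ∑ f_i f_i^*` of a finite sequence of vectors in `ℂ^d`. -/
noncomputable def frameOp {d n : ℕ} (F : Fin n → Fin d → ℂ) : Matrix (Fin d) (Fin d) ℂ :=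
  ∑ l, Matrix.vecMulVec (F l) (star (F l))

/-- The squared norm `‖g‖²` of a vector in `ℂ^d`. -/
noncomputable def normSqVec {d : ℕ} (g : Fin d → ℂ) : ℝ :=
  ∑ i, Complex.normSq (g i)

open scoped Classical in
/-- Eigenvalues of a (Hermitian) matrix arranged in decreasing order. -/
noncomputable def eigsDesc {d : ℕ} (S : Matrix (Fin d) (Fin d) ℂ) : Fin d → ℝ :=
  if h : S.IsHermitian then sortDesc h.eigenvalues else 0

open scoped Classical in
/-- Eigenvalues of a (Hermitian) matrix arranged in increasing order. -/
noncomputable def eigsAsc {d : ℕ} (S : Matrix (Fin d) (Fin d) ℂ) : Fin d → ℝ :=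
  if h : S.IsHermitian then sortAsc h.eigenvalues else 0

/-- `Γ_d(a)`: non-increasing nonnegative vectors in `ℝ^d` majorizing `a`. -/
def Gamma {k : ℕ} (d : ℕ) (a : Fin k → ℝ) : Set (Fin d → ℝ) :=
  {μ | Antitone μ ∧ (∀ i, 0 ≤ μ i) ∧ MajorizedByPad a μ}

/-- The convex potential `P_f = tr f(S) = ∑ f(λ_i(S))`. -/
noncomputable def potential {d : ℕ} (f : ℝ → ℝ) (S : Matrix (Fin d) (Fin d) ℂ) : ℝ :=
  ∑ i, f (eigsDesc S i)

/-- Final averages `Q_{j,r} = (1/(r-j)) (∑_{i=j+1}^k a_i + ∑_{i=j+1}^r λ_i)` (1-based). -/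
noncomputable def finalAvg {d k : ℕ} (lam : Fin d → ℝ) (a : Fin k → ℝ) (j r : ℕ) : ℝ :=
  ((∑ i : Fin k, if j ≤ (i : ℕ) then a i else 0) +
      (∑ i : Fin d, if j ≤ (i : ℕ) ∧ (i : ℕ) < r then lam i else 0)) / ((r : ℝ) - (j : ℝ))

/-- Initial averages: `initAvg lam a lo hi = P_{lo+1,hi}` (1-based), i.e. the average of
`h_i = λ_i + a_i` over the (0-based) index window `[lo, hi)`. -/
noncomputable def initAvg {d k : ℕ} (lam : Fin d → ℝ) (a : Fin k → ℝ) (lo hi : ℕ) : ℝ :=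
  ((∑ i : Fin d, if lo ≤ (i : ℕ) ∧ (i : ℕ) < hi then lam i else 0) +
      (∑ i : Fin k, if lo ≤ (i : ℕ) ∧ (i : ℕ) < hi then a i else 0)) / ((hi : ℝ) - (lo : ℝ))

/-- 1-based access to a vector indexed by `Fin d`. -/
noncomputable def get1 {d : ℕ} (lam : Fin d → ℝ) (i : ℕ) : ℝ :=
  if h : i - 1 < d then lam ⟨i - 1, h⟩ else 0

/-- The index `s` is feasible for the pair `(λ, a)`: the unique vector
`ν_s = (c·1_{r-s}, λ_{r+1},…,λ_d)` determined by the truncated data satisfies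
`a^s ≺ ν_s - λ^s`. -/
def FeasibleIdx {d k : ℕ} (lam : Fin d → ℝ) (a : Fin k → ℝ) (s : ℕ) : Prop :=
  ∃ r : ℕ, ∃ c : ℝ, s < r ∧ r ≤ d ∧ 0 < c ∧
    (∀ i : Fin d, s ≤ (i : ℕ) → (i : ℕ) < r → lam i ≤ c) ∧
    (∀ hrd : r < d, c ≤ lam ⟨r, hrd⟩) ∧
    ((r : ℝ) - (s : ℝ)) * c =
      (∑ i : Fin d, if s ≤ (i : ℕ) ∧ (i : ℕ) < r then lam i else 0) +
        (∑ i : Fin k, if s ≤ (i : ℕ) then a i else 0) ∧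
    MajorizedByPad (fun i : Fin (k - s) => a ⟨s + (i : ℕ), by have := i.isLt; omega⟩)
      (fun i : Fin (d - s) =>
        if s + (i : ℕ) < r then c - lam ⟨s + (i : ℕ), by have := i.isLt; omega⟩ else 0)

section Sorting
variable {m : ℕ}

lemma sortDesc_antitone (x : Fin m → ℝ) : Antitone (sortDesc x) := by
  intro i j h
  exact Tuple.monotone_sort x (Fin.rev_le_rev.mpr h)

lemma sortAsc_monotone (x : Fin m → ℝ) : Monotone (sortAsc x) := Tuple.monotone_sort x

lemma sortDesc_perm (x : Fin m → ℝ) : ∃ σ : Equiv.Perm (Fin m), sortDesc x = x ∘ σ :=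
  ⟨Fin.revPerm.trans (Tuple.sort x), by ext i; simp [sortDesc]⟩

lemma sortDesc_eq (z w : Fin m → ℝ) (σ : Equiv.Perm (Fin m)) (hw : Antitone w) (h : w = z ∘ σ) :
    sortDesc z = w := by
  obtain ⟨τ, hτ⟩ := sortDesc_perm z
  have h1 : Antitone (z ∘ τ) := hτ ▸ sortDesc_antitone z
  rw [hτ, h]
  exact Tuple.unique_antitone h1 (h ▸ hw)

lemma sortDesc_of_antitone (z : Fin m → ℝ) (hz : Antitone z) : sortDesc z = z :=
  sortDesc_eq z z 1 hz (by ext; simp)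

lemma sortDesc_comp (z : Fin m → ℝ) (σ : Equiv.Perm (Fin m)) :
    sortDesc (z ∘ σ) = sortDesc z := by
  obtain ⟨τ, hτ⟩ := sortDesc_perm z
  refine sortDesc_eq _ _ (τ.trans σ.symm) (sortDesc_antitone z) ?_
  rw [hτ]; ext i; simp

lemma sum_sortDesc (x : Fin m → ℝ) (g : ℝ → ℝ) : ∑ i, g (sortDesc x i) = ∑ i, g (x i) := by
  obtain ⟨σ, hσ⟩ := sortDesc_perm x
  rw [hσ]
  exact Equiv.sum_comp σ (fun i => g (x i))

lemma majorizedBy_sort (x y : Fin m → ℝ) (h : MajorizedBy x y) :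
    MajorizedBy (sortDesc x) (sortDesc y) := by
  refine ⟨?_, ?_⟩
  · intro j
    rw [sortDesc_of_antitone _ (sortDesc_antitone x), sortDesc_of_antitone _ (sortDesc_antitone y)]
    exact h.1 j
  · have h1 := sum_sortDesc x id
    have h2 := sum_sortDesc y id
    simp only [id] at h1 h2
    rw [h1, h2, h.2]

lemma majorizedBy_trans {x y z : Fin m → ℝ} (h : MajorizedBy x y) (h' : MajorizedBy y z) :
    MajorizedBy x z :=
  ⟨fun j => (h.1 j).trans (h'.1 j), h.2.trans h'.2⟩

/-- Hinge inequalities imply majorization. -/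
lemma majorizedBy_of_hinge (x y : Fin m → ℝ) (hs : ∑ i, x i = ∑ i, y i)
    (h : ∀ t : ℝ, ∑ i, max (x i - t) 0 ≤ ∑ i, max (y i - t) 0) : MajorizedBy x y := by
  refine ⟨fun j => ?_, hs⟩
  set t := sortDesc y j with ht
  have h1 : ∑ i ∈ Iic j, (sortDesc x i - t) ≤ ∑ i, max (x i - t) 0 := by
    rw [← sum_sortDesc x (fun u => max (u - t) 0)]
    calc _ ≤ ∑ i ∈ Iic j, max (sortDesc x i - t) 0 := sum_le_sum fun i _ => le_max_left _ _
      _ ≤ _ := sum_le_sum_of_subset_of_nonneg (subset_univ _) fun i _ _ => le_max_right _ _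
  have h2 : ∑ i, max (y i - t) 0 = ∑ i ∈ Iic j, (sortDesc y i - t) := by
    rw [← sum_sortDesc y (fun u => max (u - t) 0)]
    symm
    rw [← Finset.sum_subset (subset_univ (Iic j))]
    · refine sum_congr rfl fun i hi => ?_
      rw [max_eq_left]
      have := sortDesc_antitone y (mem_Iic.mp hi)
      linarith
    · intro i _ hi
      rw [mem_Iic, not_le] at hi
      have := sortDesc_antitone y hi.le
      exact max_eq_right (by linarith)
  have h3 := h1.trans ((h t).trans h2.le)
  rw [sum_sub_distrib, sum_sub_distrib] at h3
  linarith

end Sorting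

section Chain
variable {m : ℕ}

/-- T-transforms lead from `x` to any antitone `a` majorized (in prefix form) by `x`. -/
lemma chain (Q : (Fin m → ℝ) → Prop)
    (hT : ∀ x, Q x → ∀ j l : Fin m, j ≠ l → ∀ δ : ℝ, 0 ≤ δ → x l + δ ≤ x j →
      Q (fun i => if i = j then x j - δ else if i = l then x l + δ else x i))
    (a : Fin m → ℝ) (ha : Antitone a) :
    ∀ (n : ℕ) (x : Fin m → ℝ), (univ.filter fun i => x i ≠ a i).card = n →
      (∀ j, ∑ i ∈ Iic j, a i ≤ ∑ i ∈ Iic j, x i) → ∑ i, a i = ∑ i, x i → Q x → Q a := by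
  intro n
  induction n using Nat.strong_induction_on with
  | _ n ih =>
  intro x hn hp hs hQ
  by_cases hxa : ∀ i, a i ≤ x i
  · have : ∀ i ∈ univ, a i = x i := (sum_eq_sum_iff_of_le (fun i _ => hxa i)).mp hs
    have : a = x := funext fun i => this i (mem_univ _)
    rwa [this]
  push Not at hxa
  -- smallest l with x l < a l
  obtain ⟨l, hl, hmin⟩ : ∃ l, x l < a l ∧ ∀ i < l, a i ≤ x i := by
    obtain ⟨l, hl⟩ := exists_minimal_of_wellFoundedLT (fun i => x i < a i) hxa
    refine ⟨l, hl.1, fun i hi => ?_⟩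
    by_contra hc
    exact absurd (hl.2 (not_le.mp hc) hi.le) (not_le.mpr hi)
  obtain ⟨j, hjl, hj⟩ : ∃ j < l, a j < x j := by
    by_contra hc
    push Not at hc
    have : ∑ i ∈ Iic l, x i < ∑ i ∈ Iic l, a i := by
      refine sum_lt_sum (fun i hi => ?_) ⟨l, by simp, hl⟩
      rcases (mem_Iic.mp hi).lt_or_eq with h | h
      · exact hc i h
      · rw [h]; exact hl.le
    linarith [hp l]
  set δ := min (x j - a j) (a l - x l) with hδ
  have hδ0 : 0 < δ := lt_min (by linarith) (by linarith)
  have hδ1 : δ ≤ x j - a j := min_le_left _ _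
  have hδ2 : δ ≤ a l - x l := min_le_right _ _
  have hajl := ha hjl.le
  set x' : Fin m → ℝ := fun i => if i = j then x j - δ else if i = l then x l + δ else x i with hx'
  have hQ' : Q x' := hT x hQ j l hjl.ne δ hδ0.le (by linarith)
  have hform : ∀ i, x' i = x i + ((if i = j then -δ else 0) + (if i = l then δ else 0)) := by
    intro i
    simp only [hx']
    by_cases h1 : i = j
    · subst h1; simp [hjl.ne]; ring
    · by_cases h2 : i = l
      · subst h2; simp [h1]
      · simp [h1, h2]
  refine ih _ ?_ x' rfl ?_ ?_ hQ'
  · rw [← hn]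
    apply card_lt_card
    rw [ssubset_iff_of_subset]
    · have : δ = x j - a j ∨ δ = a l - x l := min_choice _ _
      rcases this with h | h
      · refine ⟨j, by simp [hj.ne'], ?_⟩
        simp [hx', h]
      · refine ⟨l, by simp [hl.ne], ?_⟩
        simp [hx', h, hjl.ne']
    · intro i
      simp only [mem_filter, mem_univ, true_and]
      intro hi hc
      have hij : i ≠ j := by rintro rfl; exact hj.ne' hc
      have hil : i ≠ l := by rintro rfl; exact hl.ne hc
      exact hi (by simp [hx', hij, hil, hc])
  · intro p
    simp only [hform]
    rw [sum_add_distrib, sum_add_distrib, sum_ite_eq', sum_ite_eq']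
    simp only [mem_Iic]
    by_cases h1 : j ≤ p
    · by_cases h2 : l ≤ p
      · simp [h1, h2]; exact hp p
      · simp only [h1, h2, if_true, if_false]
        have : ∑ i ∈ Iic p, (x i - a i) ≥ x j - a j := by
          refine single_le_sum (f := fun i => x i - a i) (fun i hi => ?_) (mem_Iic.mpr h1)
          have := hmin i (lt_of_le_of_lt (mem_Iic.mp hi) (not_le.mp h2))
          show 0 ≤ x i - a i
          linarith
        rw [sum_sub_distrib] at this
        linarith
    · have h2 : ¬ l ≤ p := fun h => h1 (hjl.le.trans h)
      simp [h1, h2]; exact hp p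
  · simp only [hform]
    rw [sum_add_distrib, sum_add_distrib, sum_ite_eq', sum_ite_eq']
    simp [hs]

/-- Karamata's inequality. -/
lemma karamata (f : ℝ → ℝ) (hf : ConvexOn ℝ (Set.Ici 0) f) (x y : Fin m → ℝ)
    (hy : ∀ i, 0 ≤ y i) (h : MajorizedBy x y) : ∑ i, f (x i) ≤ ∑ i, f (y i) := by
  have key := chain (m := m) (fun z => (∀ i, 0 ≤ z i) ∧ ∑ i, f (z i) ≤ ∑ i, f (y i)) ?_
    (sortDesc x) (sortDesc_antitone x) _ (sortDesc y) rfl h.1 ?_ ?_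
  · rw [← sum_sortDesc x f]; exact key.2
  · rintro z ⟨hz0, hz⟩ j l hjl δ hδ hle
    refine ⟨fun i => ?_, le_trans ?_ hz⟩
    · have := hz0 l
      show 0 ≤ if i = j then z j - δ else if i = l then z l + δ else z i
      split_ifs
      · linarith
      · linarith
      · exact hz0 i
    · rcases eq_or_lt_of_le (show z l ≤ z j by linarith) with he | hlt
      · have : δ = 0 := by linarith
        subst this
        refine (sum_congr rfl fun i _ => ?_).le
        congr 1
        by_cases h1 : i = j
        · subst h1; simp
        · by_cases h2 : i = l
          · subst h2; simp [h1]
          · simp [h1, h2]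
      set D := z j - z l with hD
      have hD0 : 0 < D := by linarith
      have hq : δ / D * z j - δ / D * z l = δ := by
        rw [← mul_sub]; exact div_mul_cancel₀ _ hD0.ne'
      have c1 : f (z j - δ) ≤ (1 - δ / D) * f (z j) + (δ / D) * f (z l) := by
        have := hf.2 (hz0 j) (hz0 l) (show 0 ≤ 1 - δ / D by rw [sub_nonneg, div_le_one hD0]; linarith)
          (show 0 ≤ δ / D by positivity) (by ring)
        simp only [smul_eq_mul] at this
        rwa [show (1 - δ / D) * z j + δ / D * z l = z j - δ by linear_combination -hq] at this
      have c2 : f (z l + δ) ≤ (δ / D) * f (z j) + (1 - δ / D) * f (z l) := by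
        have := hf.2 (hz0 j) (hz0 l) (show 0 ≤ δ / D by positivity)
          (show 0 ≤ 1 - δ / D by rw [sub_nonneg, div_le_one hD0]; linarith) (by ring)
        simp only [smul_eq_mul] at this
        rwa [show δ / D * z j + (1 - δ / D) * z l = z l + δ by linear_combination hq] at this
      have e : ∀ i, f (if i = j then z j - δ else if i = l then z l + δ else z i) =
          f (z i) + ((if i = j then f (z j - δ) - f (z j) else 0) +
            (if i = l then f (z l + δ) - f (z l) else 0)) := by
        intro i
        by_cases h1 : i = j
        · subst h1; simp [hjl]
        · by_cases h2 : i = l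
          · subst h2; simp [h1]
          · simp [h1, h2]
      simp only [e]
      rw [sum_add_distrib, sum_add_distrib, sum_ite_eq', sum_ite_eq']
      simp only [mem_univ, if_true]
      linarith
  · have h1 := sum_sortDesc x id
    have h2 := sum_sortDesc y id
    simp only [id] at h1 h2
    rw [h1, h2, h.2]
  · refine ⟨fun i => ?_, (sum_sortDesc y f).le⟩
    obtain ⟨σ, hσ⟩ := sortDesc_perm y
    rw [hσ]; exact hy _

end Chain
section Minimizer
variable {d : ℕ}

/-- Relaxed feasible set: nonnegative vectors with prefix sums dominating those of `b`. -/
def relaxedSet (b : Fin d → ℝ) : Set (Fin d → ℝ) :=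
  {μ | (∀ i, 0 ≤ μ i) ∧ (∀ j, ∑ i ∈ Iic j, b i ≤ ∑ i ∈ Iic j, μ i) ∧ ∑ i, μ i = ∑ i, b i}

lemma relaxedSet_compact (b : Fin d → ℝ) : IsCompact (relaxedSet b) := by
  have hb : relaxedSet b ⊆ Set.Icc 0 (fun _ => ∑ i, b i) := by
    intro μ hμ
    refine ⟨fun i => hμ.1 i, fun i => ?_⟩
    show μ i ≤ _
    rw [← hμ.2.2]
    exact single_le_sum (fun i _ => hμ.1 i) (mem_univ i)
  refine isCompact_Icc.of_isClosed_subset ?_ hb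
  have : relaxedSet b = (⋂ i, {μ : Fin d → ℝ | 0 ≤ μ i}) ∩
      ((⋂ j, {μ : Fin d → ℝ | ∑ i ∈ Iic j, b i ≤ ∑ i ∈ Iic j, μ i}) ∩
        {μ : Fin d → ℝ | ∑ i, μ i = ∑ i, b i}) := by
    ext μ
    simp [relaxedSet]
  rw [this]
  refine (isClosed_iInter fun i => ?_).inter ((isClosed_iInter fun j => ?_).inter ?_)
  · exact isClosed_le continuous_const (continuous_apply i)
  · exact isClosed_le continuous_const (continuous_finsetSum _ fun i _ => continuous_apply i)
  · exact isClosed_eq (continuous_finsetSum _ fun i _ => continuous_apply i) continuous_const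

/-- No profitable exchange at the minimizer of the sum of squares. -/
lemma exchange (lam b μ : Fin d → ℝ) (hμ : μ ∈ relaxedSet b)
    (hmin : ∀ γ ∈ relaxedSet b, ∑ i, (lam i + μ i) ^ 2 ≤ ∑ i, (lam i + γ i) ^ 2)
    (i j : Fin d) (hij : lam j + μ j < lam i + μ i) (hi : 0 < μ i) :
    i < j ∧ ∃ l, i ≤ l ∧ l < j ∧ ∑ p ∈ Iic l, μ p = ∑ p ∈ Iic l, b p := by
  have hne : i ≠ j := by rintro rfl; exact lt_irrefl _ hij
  by_contra hcon
  have hslack : ∀ l, i ≤ l → l < j → ∑ p ∈ Iic l, b p < ∑ p ∈ Iic l, μ p := by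
    intro l h1 h2
    refine lt_of_le_of_ne (hμ.2.1 l) fun he => hcon ⟨h1.trans_lt h2, l, h1, h2, he.symm⟩
  obtain ⟨ε₀, hε₀, hε₀'⟩ : ∃ ε₀ : ℝ, 0 < ε₀ ∧
      ∀ l ∈ Ico i j, ε₀ ≤ ∑ p ∈ Iic l, μ p - ∑ p ∈ Iic l, b p := by
    rcases (Ico i j).eq_empty_or_nonempty with he | hne'
    · exact ⟨1, one_pos, by simp [he]⟩
    · obtain ⟨l, hl, hl'⟩ := exists_min_image (Ico i j)
        (fun l => ∑ p ∈ Iic l, μ p - ∑ p ∈ Iic l, b p) hne'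
      rw [mem_Ico] at hl
      exact ⟨_, by linarith [hslack l hl.1 hl.2], hl'⟩
  set ε := min ε₀ (min (μ i) ((lam i + μ i - (lam j + μ j)) / 2)) with hε
  have hε0 : 0 < ε := lt_min hε₀ (lt_min hi (by linarith))
  have hε1 : ε ≤ ε₀ := min_le_left _ _
  have hε2 : ε ≤ μ i := (min_le_right _ _).trans (min_le_left _ _)
  have hε3 : ε ≤ (lam i + μ i - (lam j + μ j)) / 2 := (min_le_right _ _).trans (min_le_right _ _)
  set γ : Fin d → ℝ := fun p => μ p + ((if p = i then -ε else 0) + (if p = j then ε else 0)) with hγ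
  have hγmem : γ ∈ relaxedSet b := by
    refine ⟨fun p => ?_, fun l => ?_, ?_⟩
    · have := hμ.1 p
      simp only [hγ]
      by_cases h1 : p = i
      · subst h1; simp [hne]; linarith
      · by_cases h2 : p = j
        · subst h2; simp [h1]; linarith
        · simp [h1, h2, this]
    · simp only [hγ]
      rw [sum_add_distrib, sum_add_distrib, sum_ite_eq', sum_ite_eq']
      simp only [mem_Iic]
      have := hμ.2.1 l
      by_cases h1 : i ≤ l
      · by_cases h2 : j ≤ l
        · simp [h1, h2, this]
        · simp only [h1, h2, if_true, if_false]
          have := hε₀' l (mem_Ico.mpr ⟨h1, not_le.mp h2⟩)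
          linarith
      · simp only [h1, if_false]
        split_ifs <;> linarith
    · simp only [hγ]
      rw [sum_add_distrib, sum_add_distrib, sum_ite_eq', sum_ite_eq']
      simp [hμ.2.2]
  have hval := hmin γ hγmem
  have e : ∀ p, (lam p + γ p) ^ 2 = (lam p + μ p) ^ 2 +
      ((if p = i then -2 * ε * (lam i + μ i) + ε ^ 2 else 0) +
        (if p = j then 2 * ε * (lam j + μ j) + ε ^ 2 else 0)) := by
    intro p
    simp only [hγ]
    by_cases h1 : p = i
    · subst h1; simp [hne]; ring
    · by_cases h2 : p = j
      · subst h2; simp [h1]; ring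
      · simp [h1, h2]
  simp only [e] at hval
  rw [sum_add_distrib, sum_add_distrib, sum_ite_eq', sum_ite_eq'] at hval
  simp only [mem_univ, if_true] at hval
  nlinarith

/-- Existence of the optimal vector. -/
lemma exists_optimal (lam b : Fin d → ℝ) (hlam : Monotone lam) (hb : ∀ i, 0 ≤ b i) :
    ∃ μ ∈ relaxedSet b, Antitone μ ∧
      ∀ γ ∈ relaxedSet b, MajorizedBy (fun i => lam i + μ i) (fun i => lam i + γ i) := by
  have hne : (relaxedSet b).Nonempty := ⟨b, hb, fun _ => le_rfl, rfl⟩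
  obtain ⟨μ, hμ, hmin⟩ := (relaxedSet_compact b).exists_isMinOn hne
    (f := fun μ => ∑ i, (lam i + μ i) ^ 2) (by fun_prop)
  have hmin' : ∀ γ ∈ relaxedSet b, ∑ i, (lam i + μ i) ^ 2 ≤ ∑ i, (lam i + γ i) ^ 2 :=
    fun γ hγ => hmin hγ
  refine ⟨μ, hμ, ?_, ?_⟩
  · intro i j hij
    by_contra hc
    rw [not_le] at hc
    have := exchange lam b μ hμ hmin' j i (by linarith [hlam hij]) (lt_of_le_of_lt (hμ.1 i) hc)
    exact absurd this.1 (not_lt.mpr hij)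
  · intro γ hγ
    refine majorizedBy_of_hinge _ _ ?_ fun t => ?_
    · simp only [sum_add_distrib, hμ.2.2, hγ.2.2]
    · set T := univ.filter fun i => t < lam i + μ i with hT
      have key : ∑ i ∈ T, μ i ≤ ∑ i ∈ T, γ i := by
        by_cases hT' : ∃ i ∈ T, 0 < μ i
        swap
        · push Not at hT'
          exact sum_le_sum fun i hi => (hT' i hi).trans (hγ.1 i)
        by_cases hTc : ∃ j, j ∉ T
        swap
        · push Not at hTc
          have : T = univ := eq_univ_of_forall hTc
          rw [this, hμ.2.2, hγ.2.2]
        obtain ⟨i, hi, himax⟩ := exists_maximal_of_wellFoundedGT (fun i => i ∈ T ∧ 0 < μ i) hT'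
        obtain ⟨j, hj, hjmin⟩ := exists_minimal_of_wellFoundedLT (fun j => j ∉ T) hTc
        have hiT := hi.1
        have hjT := hj
        simp only [hT, mem_filter, mem_univ, true_and, not_lt] at hiT hjT
        obtain ⟨hlt, l, hil, hlj, htight⟩ := exchange lam b μ hμ hmin' i j (by linarith) hi.2
        have hsub : Iic l ⊆ T := by
          intro p hp
          by_contra hpT
          have h1 := (mem_Iic.mp hp).trans_lt hlj
          exact absurd (hjmin hpT h1.le) (not_le.mpr h1)
        rw [← sum_sdiff hsub, ← sum_sdiff hsub]
        refine add_le_add ?_ ?_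
        · refine sum_le_sum fun p hp => ?_
          rw [mem_sdiff, mem_Iic, not_le] at hp
          refine le_trans ?_ (hγ.1 p)
          by_contra hc
          rw [not_le] at hc
          have h1 : i < p := hil.trans_lt hp.2
          exact absurd (himax ⟨hp.1, hc⟩ h1.le) (not_le.mpr h1)
        · rw [htight]; exact hγ.2.1 l
      have h1 : ∑ i, max (lam i + μ i - t) 0 = ∑ i ∈ T, (lam i + μ i - t) := by
        rw [hT, sum_filter]
        refine sum_congr rfl fun i _ => ?_
        split_ifs with h
        · exact max_eq_left (by linarith)
        · exact max_eq_right (by linarith)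
      have h2 : ∑ i ∈ T, (lam i + γ i - t) ≤ ∑ i, max (lam i + γ i - t) 0 :=
        calc _ ≤ ∑ i ∈ T, max (lam i + γ i - t) 0 := sum_le_sum fun i _ => le_max_left _ _
          _ ≤ _ := sum_le_sum_of_subset_of_nonneg (subset_univ _) fun i _ _ => le_max_right _ _
      rw [h1]
      refine le_trans ?_ h2
      simp only [sum_sub_distrib, sum_add_distrib]
      linarith

end Minimizer
section Spectral
open Matrix
variable {d : ℕ}

/-- Real diagonal matrix. -/
noncomputable def rdiag (x : Fin d → ℝ) : Matrix (Fin d) (Fin d) ℂ :=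
  Matrix.diagonal fun i => (x i : ℂ)

lemma conj_rdiag_apply (U : Matrix (Fin d) (Fin d) ℂ) (x : Fin d → ℝ) (i j : Fin d) :
    (U * rdiag x * Uᴴ) i j = ∑ p, U i p * (x p : ℂ) * star (U j p) := by
  rw [Matrix.mul_apply]; simp [rdiag, Matrix.mul_diagonal]

lemma rdiag_isHermitian (U : Matrix (Fin d) (Fin d) ℂ) (x : Fin d → ℝ) :
    (U * rdiag x * Uᴴ).IsHermitian := by
  apply Matrix.isHermitian_mul_mul_conjTranspose
  ext i j
  by_cases h : i = j
  · subst h; simp [rdiag]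
  · simp [rdiag, h, Ne.symm h]

lemma rdiag_posSemidef (U : Matrix (Fin d) (Fin d) ℂ) (x : Fin d → ℝ) (hx : ∀ i, 0 ≤ x i) :
    (U * rdiag x * Uᴴ).PosSemidef := by
  apply Matrix.PosSemidef.mul_mul_conjTranspose_same
  refine Matrix.PosSemidef.diagonal fun i => ?_
  simpa using hx i

lemma conj_rdiag_add (U : Matrix (Fin d) (Fin d) ℂ) (x y : Fin d → ℝ) :
    U * rdiag x * Uᴴ + U * rdiag y * Uᴴ = U * rdiag (fun i => x i + y i) * Uᴴ := by
  ext i j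
  rw [Matrix.add_apply, conj_rdiag_apply, conj_rdiag_apply, conj_rdiag_apply, ← sum_add_distrib]
  refine sum_congr rfl fun p _ => ?_
  push_cast; ring

lemma conj_rdiag_neg (U : Matrix (Fin d) (Fin d) ℂ) (x : Fin d → ℝ) :
    -(U * rdiag x * Uᴴ) = U * rdiag (fun i => - x i) * Uᴴ := by
  ext i j
  rw [Matrix.neg_apply, conj_rdiag_apply, conj_rdiag_apply, ← sum_neg_distrib]
  refine sum_congr rfl fun p _ => ?_
  push_cast; ring

lemma conj_rdiag_const (U : Matrix (Fin d) (Fin d) ℂ) (hU : Uᴴ * U = 1) (t : ℝ) :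
    U * rdiag (fun _ => t) * Uᴴ = (t : ℂ) • (1 : Matrix (Fin d) (Fin d) ℂ) := by
  have h1 : rdiag (fun _ : Fin d => t) = (t : ℂ) • (1 : Matrix (Fin d) (Fin d) ℂ) := by
    rw [Matrix.smul_one_eq_diagonal]; rfl
  rw [h1, Matrix.mul_smul, Matrix.mul_one, Matrix.smul_mul, mul_eq_one_comm.mp hU]

lemma conj_rdiag_trace (U : Matrix (Fin d) (Fin d) ℂ) (hU : Uᴴ * U = 1) (x : Fin d → ℝ) :
    (U * rdiag x * Uᴴ).trace = ((∑ i, x i : ℝ) : ℂ) := by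
  rw [Matrix.trace_mul_comm, ← Matrix.mul_assoc, hU, Matrix.one_mul, rdiag, Matrix.trace_diagonal]
  push_cast; rfl

lemma conj_rdiag_perm (U : Matrix (Fin d) (Fin d) ℂ) (hU : Uᴴ * U = 1) (x : Fin d → ℝ)
    (σ : Equiv.Perm (Fin d)) :
    ∃ V : Matrix (Fin d) (Fin d) ℂ, Vᴴ * V = 1 ∧ U * rdiag x * Uᴴ = V * rdiag (x ∘ σ) * Vᴴ := by
  refine ⟨U.submatrix id σ, ?_, ?_⟩
  · ext i j
    have := congrFun (congrFun hU (σ i)) (σ j)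
    simp only [Matrix.mul_apply, Matrix.conjTranspose_apply, Matrix.submatrix_apply, id] at this ⊢
    rw [this]
    simp [Matrix.one_apply]
  · ext i j
    rw [conj_rdiag_apply, conj_rdiag_apply]
    exact (Equiv.sum_comp σ (fun p => U i p * (x p : ℂ) * star (U j p))).symm

lemma quad_rdiag (U : Matrix (Fin d) (Fin d) ℂ) (α : Fin d → ℝ) (x : Fin d → ℂ) :
    star x ⬝ᵥ (U * rdiag α * Uᴴ) *ᵥ x =
      ((∑ i, α i * Complex.normSq ((Uᴴ *ᵥ x) i) : ℝ) : ℂ) := by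
  rw [← Matrix.mulVec_mulVec, ← Matrix.mulVec_mulVec, Matrix.dotProduct_mulVec]
  have : star x ᵥ* U = star (Uᴴ *ᵥ x) := by
    rw [Matrix.star_mulVec, Matrix.conjTranspose_conjTranspose]
  rw [this, rdiag]
  simp only [dotProduct, Matrix.mulVec_diagonal, Pi.star_apply]
  push_cast
  refine sum_congr rfl fun i _ => ?_
  rw [Complex.normSq_eq_conj_mul_self]
  simp only [Complex.star_def]
  ring

/-- Weyl monotonicity, in diagonalized form. -/
lemma weyl_core (U W : Matrix (Fin d) (Fin d) ℂ) (hU : Uᴴ * U = 1) (hW : Wᴴ * W = 1)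
    (α β : Fin d → ℝ) (hα : Antitone α) (hβ : Antitone β)
    (h : (W * rdiag β * Wᴴ - U * rdiag α * Uᴴ).PosSemidef) (i : Fin d) : α i ≤ β i := by
  let L : (Fin d → ℂ) →ₗ[ℂ] ({j : Fin d // j ≠ i} → ℂ) :=
    LinearMap.pi fun j => if i < j.1 then (LinearMap.proj j.1) ∘ₗ (Matrix.mulVecLin Uᴴ)
      else (LinearMap.proj j.1) ∘ₗ (Matrix.mulVecLin Wᴴ)
  have hker : LinearMap.ker L ≠ ⊥ := by
    apply LinearMap.ker_ne_bot_of_finrank_lt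
    rw [Module.finrank_fintype_fun_eq_card, Module.finrank_fintype_fun_eq_card]
    simp only [Fintype.card_subtype_compl, Fintype.card_fin, Fintype.card_subtype_eq, ne_eq]
    have := i.pos
    omega
  obtain ⟨x, hx, hx0⟩ := Submodule.exists_mem_ne_zero_of_ne_bot hker
  have hL : ∀ j : {j : Fin d // j ≠ i}, L x j = 0 := fun j => by
    rw [LinearMap.mem_ker.mp hx]; rfl
  have hp : ∀ j, i < j → (Uᴴ *ᵥ x) j = 0 := by
    intro j hj
    have := hL ⟨j, hj.ne'⟩
    simpa [L, hj] using this
  have hq : ∀ j, j < i → (Wᴴ *ᵥ x) j = 0 := by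
    intro j hj
    have := hL ⟨j, hj.ne⟩
    simpa [L, hj.le, not_lt.mpr hj.le] using this
  have hnorm : ∀ V : Matrix (Fin d) (Fin d) ℂ, Vᴴ * V = 1 →
      ((∑ j, Complex.normSq ((Vᴴ *ᵥ x) j) : ℝ) : ℂ) = star x ⬝ᵥ x := by
    intro V hV
    have := quad_rdiag V (fun _ => 1) x
    rw [conj_rdiag_const V hV] at this
    simpa using this.symm
  have hUW : ∑ j, Complex.normSq ((Uᴴ *ᵥ x) j) = ∑ j, Complex.normSq ((Wᴴ *ᵥ x) j) := by
    have := (hnorm U hU).trans (hnorm W hW).symm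
    exact_mod_cast this
  set N := ∑ j, Complex.normSq ((Uᴴ *ᵥ x) j) with hN
  have hN0 : 0 < N := by
    refine lt_of_le_of_ne (sum_nonneg fun j _ => Complex.normSq_nonneg _) fun h0 => hx0 ?_
    have h1 := hnorm U hU
    rw [← hN, ← h0] at h1
    exact dotProduct_star_self_eq_zero.mp (by rw [← h1]; simp)
  have hpos := h.dotProduct_mulVec_nonneg x
  rw [Matrix.sub_mulVec, dotProduct_sub, quad_rdiag, quad_rdiag, sub_nonneg] at hpos
  have hpos' : ∑ j, α j * Complex.normSq ((Uᴴ *ᵥ x) j) ≤ ∑ j, β j * Complex.normSq ((Wᴴ *ᵥ x) j) := by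
    exact_mod_cast hpos
  have h1 : α i * N ≤ ∑ j, α j * Complex.normSq ((Uᴴ *ᵥ x) j) := by
    rw [hN, mul_sum]
    refine sum_le_sum fun j _ => ?_
    rcases le_or_gt j i with hj | hj
    · exact mul_le_mul_of_nonneg_right (hα hj) (Complex.normSq_nonneg _)
    · rw [hp j hj]; simp
  have h2 : ∑ j, β j * Complex.normSq ((Wᴴ *ᵥ x) j) ≤ β i * N := by
    rw [hUW, mul_sum]
    refine sum_le_sum fun j _ => ?_
    rcases lt_or_ge j i with hj | hj
    · rw [hq j hj]; simp
    · exact mul_le_mul_of_nonneg_right (hβ hj) (Complex.normSq_nonneg _)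
  have h3 : α i * N ≤ β i * N := by linarith
  exact le_of_mul_le_mul_right h3 hN0

lemma exists_diag (S : Matrix (Fin d) (Fin d) ℂ) (h : S.IsHermitian) :
    ∃ U : Matrix (Fin d) (Fin d) ℂ, Uᴴ * U = 1 ∧ S = U * rdiag h.eigenvalues * Uᴴ := by
  refine ⟨h.eigenvectorUnitary, ?_, ?_⟩
  · rw [← Matrix.star_eq_conjTranspose]; exact Unitary.coe_star_mul_self _
  · conv_lhs => rw [h.spectral_theorem, Unitary.conjStarAlgAut_apply]
    rfl

lemma exists_diag_desc (S : Matrix (Fin d) (Fin d) ℂ) (h : S.IsHermitian) :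
    ∃ U : Matrix (Fin d) (Fin d) ℂ, Uᴴ * U = 1 ∧ S = U * rdiag (eigsDesc S) * Uᴴ := by
  obtain ⟨U, hU, hS⟩ := exists_diag S h
  obtain ⟨σ, hσ⟩ := sortDesc_perm h.eigenvalues
  obtain ⟨V, hV, hV'⟩ := conj_rdiag_perm U hU h.eigenvalues σ
  refine ⟨V, hV, ?_⟩
  rw [eigsDesc, dif_pos h, hσ, ← hV']
  exact hS

lemma exists_diag_asc (S : Matrix (Fin d) (Fin d) ℂ) (h : S.IsHermitian) :
    ∃ U : Matrix (Fin d) (Fin d) ℂ, Uᴴ * U = 1 ∧ S = U * rdiag (eigsAsc S) * Uᴴ := by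
  obtain ⟨U, hU, hS⟩ := exists_diag S h
  obtain ⟨V, hV, hV'⟩ := conj_rdiag_perm U hU h.eigenvalues (Tuple.sort h.eigenvalues)
  refine ⟨V, hV, ?_⟩
  rw [eigsAsc, dif_pos h, sortAsc, ← hV']
  exact hS

lemma eigsDesc_antitone (S : Matrix (Fin d) (Fin d) ℂ) : Antitone (eigsDesc S) := by
  unfold eigsDesc
  split_ifs with h
  · exact sortDesc_antitone _
  · exact antitone_const

lemma eigsAsc_monotone (S : Matrix (Fin d) (Fin d) ℂ) : Monotone (eigsAsc S) := by
  unfold eigsAsc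
  split_ifs with h
  · exact sortAsc_monotone _
  · exact monotone_const

lemma eigsAsc_nonneg (S : Matrix (Fin d) (Fin d) ℂ) (h : S.PosSemidef) (i : Fin d) :
    0 ≤ eigsAsc S i := by
  rw [eigsAsc, dif_pos h.1]
  exact h.eigenvalues_nonneg _

lemma weyl (A B : Matrix (Fin d) (Fin d) ℂ) (hA : A.IsHermitian) (hB : B.IsHermitian)
    (h : (B - A).PosSemidef) (i : Fin d) : eigsDesc A i ≤ eigsDesc B i := by
  obtain ⟨U, hU, hU'⟩ := exists_diag_desc A hA
  obtain ⟨W, hW, hW'⟩ := exists_diag_desc B hB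
  refine weyl_core U W hU hW _ _ (eigsDesc_antitone A) (eigsDesc_antitone B) ?_ i
  rw [← hU', ← hW']; exact h

lemma eigsDesc_conj (U : Matrix (Fin d) (Fin d) ℂ) (hU : Uᴴ * U = 1) (x : Fin d → ℝ) :
    eigsDesc (U * rdiag x * Uᴴ) = sortDesc x := by
  obtain ⟨σ, hσ⟩ := sortDesc_perm x
  obtain ⟨V, hV, hV'⟩ := conj_rdiag_perm U hU x σ
  rw [← hσ] at hV'
  obtain ⟨W, hW, hW'⟩ := exists_diag_desc _ (rdiag_isHermitian U x)
  ext i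
  apply le_antisymm
  · refine weyl_core W V hW hV _ _ (eigsDesc_antitone _) (sortDesc_antitone x) ?_ i
    rw [← hW', ← hV', sub_self]; exact Matrix.PosSemidef.zero
  · refine weyl_core V W hV hW _ _ (sortDesc_antitone x) (eigsDesc_antitone _) ?_ i
    rw [← hW', ← hV', sub_self]; exact Matrix.PosSemidef.zero

lemma sum_eigsDesc (S : Matrix (Fin d) (Fin d) ℂ) (h : S.IsHermitian) :
    ((∑ i, eigsDesc S i : ℝ) : ℂ) = S.trace := by
  obtain ⟨U, hU, hU'⟩ := exists_diag_desc S h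
  conv_rhs => rw [hU']
  rw [conj_rdiag_trace U hU]

lemma eigsDesc_neg (S : Matrix (Fin d) (Fin d) ℂ) (h : S.IsHermitian) (i : Fin d) :
    eigsDesc (-S) i = - eigsAsc S i := by
  obtain ⟨U, hU, hU'⟩ := exists_diag_asc S h
  have : eigsDesc (-S) = sortDesc (fun i => - eigsAsc S i) := by
    conv_lhs => rw [hU', conj_rdiag_neg, eigsDesc_conj U hU]
  rw [this, sortDesc_of_antitone]
  intro i j hij
  exact neg_le_neg (eigsAsc_monotone S hij)

lemma eigsDesc_add_const (S : Matrix (Fin d) (Fin d) ℂ) (h : S.IsHermitian) (t : ℝ) (i : Fin d) :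
    eigsDesc (S + (t : ℂ) • (1 : Matrix (Fin d) (Fin d) ℂ)) i = eigsDesc S i + t := by
  obtain ⟨U, hU, hU'⟩ := exists_diag_desc S h
  have : eigsDesc (S + (t : ℂ) • (1 : Matrix (Fin d) (Fin d) ℂ)) =
      sortDesc (fun i => eigsDesc S i + t) := by
    conv_lhs => rw [hU', ← conj_rdiag_const U hU, conj_rdiag_add, eigsDesc_conj U hU]
  rw [this, sortDesc_of_antitone]
  intro i j hij
  have := eigsDesc_antitone S hij
  show eigsDesc S j + t ≤ eigsDesc S i + t
  linarith

/-- Lidskii: `λ↑(A) + λ↓(B) ≺ λ(A+B)`. -/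
lemma lidskii (A B : Matrix (Fin d) (Fin d) ℂ) (hA : A.IsHermitian) (hB : B.IsHermitian) :
    MajorizedBy (fun i => eigsAsc A i + eigsDesc B i) (eigsDesc (A + B)) := by
  have hC : (A + B).IsHermitian := hA.add hB
  have hsum : ∑ i, (eigsAsc A i + eigsDesc B i) = ∑ i, eigsDesc (A + B) i := by
    have h1 := sum_eigsDesc (-A) hA.neg
    have h2 := sum_eigsDesc B hB
    have h3 := sum_eigsDesc (A + B) hC
    simp only [eigsDesc_neg A hA, Matrix.trace_neg, Matrix.trace_add, sum_neg_distrib] at h1 h3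
    rw [sum_add_distrib]
    apply Complex.ofReal_injective
    push_cast at h1 h2 h3 ⊢
    rw [h3, h2, ← neg_inj.mp h1]
  refine majorizedBy_of_hinge _ _ hsum fun t => ?_
  obtain ⟨U, hU, hU'⟩ := exists_diag_desc (A + B) hC
  set γ := eigsDesc (A + B) with hγ
  set P := U * rdiag (fun i => max (γ i - t) 0) * Uᴴ with hP
  have hPpos : P.PosSemidef := rdiag_posSemidef U _ fun i => le_max_right _ _
  have hPtr : P.trace = ((∑ i, max (γ i - t) 0 : ℝ) : ℂ) := conj_rdiag_trace U hU _
  have hX : (-A + P).IsHermitian := hA.neg.add hPpos.1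
  have hXt : (-A + P + (t : ℂ) • (1 : Matrix (Fin d) (Fin d) ℂ)).IsHermitian := by
    rw [← conj_rdiag_const U hU]
    exact hX.add (rdiag_isHermitian _ _)
  have hB1 : ∀ i, eigsDesc B i ≤ eigsDesc (-A + P) i + t := by
    intro i
    rw [← eigsDesc_add_const _ hX]
    refine weyl _ _ hB hXt ?_ i
    have : -A + P + (t : ℂ) • (1 : Matrix (Fin d) (Fin d) ℂ) - B =
        U * rdiag (fun i => max (γ i - t) 0 + t + - γ i) * Uᴴ := by
      rw [← conj_rdiag_add, ← conj_rdiag_add, ← conj_rdiag_neg, ← hU', conj_rdiag_const U hU]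
      abel
    rw [this]
    refine rdiag_posSemidef U _ fun i => ?_
    have := le_max_left (γ i - t) 0
    linarith
  have hB2 : ∀ i, eigsDesc (-A) i ≤ eigsDesc (-A + P) i := by
    intro i
    refine weyl _ _ hA.neg hX ?_ i
    rw [add_sub_cancel_left]; exact hPpos
  calc ∑ i, max (eigsAsc A i + eigsDesc B i - t) 0
      ≤ ∑ i, (eigsDesc (-A + P) i - eigsDesc (-A) i) := by
        refine sum_le_sum fun i _ => max_le ?_ (by linarith [hB2 i])
        have := hB1 i
        rw [eigsDesc_neg A hA]
        linarith
    _ = ∑ i, max (γ i - t) 0 := by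
        apply Complex.ofReal_injective
        rw [← hPtr, sum_sub_distrib]
        push_cast
        have h1 := sum_eigsDesc (-A) hA.neg
        have h2 := sum_eigsDesc (-A + P) hX
        push_cast at h1 h2
        rw [h1, h2, Matrix.trace_add]; ring

end Spectral
section Frames
open Matrix
variable {d k : ℕ}

lemma frameOp_posSemidef (G : Fin k → Fin d → ℂ) : (frameOp G).PosSemidef :=
  Matrix.posSemidef_sum _ fun l _ => Matrix.posSemidef_vecMulVec_self_star (G l)

lemma trace_rankOne (g : Fin d → ℂ) : (Matrix.vecMulVec g (star g)).trace = (normSqVec g : ℂ) := by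
  rw [Matrix.trace_vecMulVec, normSqVec, dotProduct]
  push_cast
  refine sum_congr rfl fun i _ => ?_
  rw [Complex.normSq_eq_conj_mul_self, mul_comm]; rfl

lemma sum_pad (a : Fin k → ℝ) (hk : k ≤ d) (j : ℕ) :
    ∑ i : Fin d, (if (i : ℕ) ≤ j then pad a d i else 0) =
      ∑ i : Fin k, (if (i : ℕ) ≤ j then a i else 0) := by
  have h1 : ∑ i : Fin d, (if (i : ℕ) ≤ j then pad a d i else 0) =
      ∑ i ∈ range d, (if i ≤ j then (if h : i < k then a ⟨i, h⟩ else 0) else 0) := by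
    rw [← Fin.sum_univ_eq_sum_range (fun i => if i ≤ j then (if h : i < k then a ⟨i, h⟩ else 0) else 0)]
    rfl
  have h2 : ∑ i : Fin k, (if (i : ℕ) ≤ j then a i else 0) =
      ∑ i ∈ range k, (if i ≤ j then (if h : i < k then a ⟨i, h⟩ else 0) else 0) := by
    rw [← Fin.sum_univ_eq_sum_range (fun i => if i ≤ j then (if h : i < k then a ⟨i, h⟩ else 0) else 0)]
    refine sum_congr rfl fun i _ => ?_
    simp
  rw [h1, h2]
  symm
  refine sum_subset (range_mono hk) fun i _ hi => ?_
  rw [mem_range] at hi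
  simp [hi]

lemma sum_Iic_eq (x : Fin d → ℝ) (j : Fin d) :
    ∑ i ∈ Iic j, x i = ∑ i : Fin d, (if (i : ℕ) ≤ (j : ℕ) then x i else 0) := by
  rw [← sum_filter]
  refine sum_congr ?_ fun _ _ => rfl
  apply Finset.ext
  intro i
  rw [Finset.mem_Iic, Finset.mem_filter, Fin.le_def]
  exact ⟨fun h => ⟨mem_univ _, h⟩, fun h => h.2⟩

lemma sum_pad_all (a : Fin k → ℝ) (hk : k ≤ d) : ∑ i, pad a d i = ∑ i, a i := by
  have := sum_pad a hk d
  have e1 : ∀ i : Fin d, (i : ℕ) ≤ d := fun i => i.2.le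
  have e2 : ∀ i : Fin k, (i : ℕ) ≤ d := fun i => i.2.le.trans hk
  simpa [e1, e2] using this

/-- Eigenvalues beyond the rank vanish. -/
lemma eigsDesc_zero_of_rank (S : Matrix (Fin d) (Fin d) ℂ) (h : S.PosSemidef) (i : Fin d)
    (hr : S.rank ≤ (i : ℕ)) : eigsDesc S i = 0 := by
  have hnn : ∀ i, 0 ≤ eigsDesc S i := by
    intro i
    rw [eigsDesc, dif_pos h.1]
    exact h.eigenvalues_nonneg _
  by_contra hne
  have hpos : 0 < eigsDesc S i := lt_of_le_of_ne (hnn i) (Ne.symm hne)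
  obtain ⟨U, hU, hU'⟩ := exists_diag_desc S h.1
  have hdet : IsUnit U.det := by
    have := congrArg Matrix.det hU
    rw [Matrix.det_mul, Matrix.det_one] at this
    exact IsUnit.of_mul_eq_one_right _ this
  have hdet' : IsUnit (Uᴴ).det := by
    rw [Matrix.det_conjTranspose]; exact hdet.star
  have hrank : S.rank = Fintype.card {j // ((eigsDesc S j : ℝ) : ℂ) ≠ 0} := by
    conv_lhs => rw [hU']
    rw [Matrix.rank_mul_eq_left_of_isUnit_det _ _ hdet',
      Matrix.rank_mul_eq_right_of_isUnit_det _ _ hdet, rdiag]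
    classical
    exact Matrix.rank_diagonal _
  have hcard : (i : ℕ) + 1 ≤ S.rank := by
    rw [hrank, Fintype.card_subtype, ← Fin.card_Iic]
    refine card_le_card fun j hj => ?_
    rw [mem_Iic] at hj
    simp only [mem_filter, mem_univ, true_and]
    have := eigsDesc_antitone S hj
    exact_mod_cast (lt_of_lt_of_le hpos this).ne'
  omega

lemma frame_prefix (a : Fin k → ℝ) (hk : k ≤ d) (G : Fin k → Fin d → ℂ)
    (hG : ∀ i, normSqVec (G i) = a i) (j : Fin d) :
    ∑ i ∈ Iic j, pad a d i ≤ ∑ i ∈ Iic j, eigsDesc (frameOp G) i := by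
  set s : Finset (Fin k) := univ.filter fun l => (l : ℕ) ≤ (j : ℕ) with hs
  set S : Matrix (Fin d) (Fin d) ℂ := ∑ l ∈ s, Matrix.vecMulVec (G l) (star (G l)) with hS
  have hSpos : S.PosSemidef :=
    Matrix.posSemidef_sum _ fun l _ => Matrix.posSemidef_vecMulVec_self_star (G l)
  have hdiff : (frameOp G - S).PosSemidef := by
    have : frameOp G - S = ∑ l ∈ univ \ s, Matrix.vecMulVec (G l) (star (G l)) := by
      rw [frameOp, hS, ← sum_sdiff (subset_univ s), add_sub_cancel_right]
    rw [this]
    exact Matrix.posSemidef_sum _ fun l _ => Matrix.posSemidef_vecMulVec_self_star (G l)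
  have hrank : S.rank ≤ (j : ℕ) + 1 := by
    have : S = (Matrix.of fun (p : Fin d) (l : s) => G l.1 p) *
        (Matrix.of fun (p : Fin d) (l : s) => G l.1 p)ᴴ := by
      ext p q
      rw [hS, Matrix.sum_apply, Matrix.mul_apply, ← sum_coe_sort]
      rfl
    rw [this]
    refine (Matrix.rank_mul_le_left _ _).trans ((Matrix.rank_le_card_width _).trans ?_)
    rw [Fintype.card_coe]
    calc s.card = (s.image fun l : Fin k => (l : ℕ)).card :=
          (card_image_of_injective _ Fin.val_injective).symm
      _ ≤ (range ((j : ℕ) + 1)).card := by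
          refine card_le_card fun p hp => ?_
          obtain ⟨l, hl, rfl⟩ := mem_image.mp hp
          simp only [hs, mem_filter, mem_univ, true_and] at hl
          exact mem_range.mpr (by omega)
      _ = _ := card_range _
  have htr : ∑ i, eigsDesc S i = ∑ i ∈ Iic j, pad a d i := by
    rw [sum_Iic_eq, sum_pad a hk]
    apply Complex.ofReal_injective
    rw [sum_eigsDesc S hSpos.1, hS, Matrix.trace_sum, ← sum_filter]
    push_cast
    refine sum_congr rfl fun l _ => ?_
    rw [trace_rankOne, hG]
  have htr2 : ∑ i, eigsDesc S i = ∑ i ∈ Iic j, eigsDesc S i := by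
    symm
    refine sum_subset (subset_univ _) fun i _ hi => ?_
    rw [mem_Iic, not_le, Fin.lt_def] at hi
    exact eigsDesc_zero_of_rank S hSpos i (by omega)
  rw [← htr, htr2]
  exact sum_le_sum fun i _ => weyl _ _ hSpos.1 (frameOp_posSemidef G).1 hdiff i

lemma frame_mem_relaxed (a : Fin k → ℝ) (hk : k ≤ d) (G : Fin k → Fin d → ℂ)
    (hG : ∀ i, normSqVec (G i) = a i) : eigsDesc (frameOp G) ∈ relaxedSet (pad a d) := by
  refine ⟨fun i => ?_, frame_prefix a hk G hG, ?_⟩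
  · rw [eigsDesc, dif_pos (frameOp_posSemidef G).1]
    exact (frameOp_posSemidef G).eigenvalues_nonneg _
  · rw [sum_pad_all a hk]
    apply Complex.ofReal_injective
    rw [sum_eigsDesc _ (frameOp_posSemidef G).1, frameOp, Matrix.trace_sum]
    push_cast
    refine sum_congr rfl fun l _ => ?_
    rw [trace_rankOne, hG]

/-- Schur-Horn via rotations of frames. -/
lemma schur_horn (M : Matrix (Fin d) (Fin d) ℂ) (a x : Fin k → ℝ) (ha : Antitone a)
    (hp : ∀ j, ∑ i ∈ Iic j, a i ≤ ∑ i ∈ Iic j, x i) (hs : ∑ i, a i = ∑ i, x i)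
    (G : Fin k → Fin d → ℂ) (hG : frameOp G = M) (hx : ∀ i, normSqVec (G i) = x i) :
    ∃ G : Fin k → Fin d → ℂ, frameOp G = M ∧ ∀ i, normSqVec (G i) = a i := by
  refine chain (m := k) (fun y => ∃ G : Fin k → Fin d → ℂ, frameOp G = M ∧
    ∀ i, normSqVec (G i) = y i) ?_ a ha _ x rfl hp hs ⟨G, hG, hx⟩
  clear hp hs hG hx G x
  rintro x ⟨G, hG, hx⟩ j l hjl δ hδ hle
  let c : ℝ → Fin d → ℂ := fun θ p => (Real.cos θ : ℂ) * G j p + (Real.sin θ : ℂ) * G l p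
  let s : ℝ → Fin d → ℂ := fun θ p => -(Real.sin θ : ℂ) * G j p + (Real.cos θ : ℂ) * G l p
  have hcont : Continuous fun θ => normSqVec (c θ) := by
    simp only [normSqVec, c]
    refine continuous_finsetSum _ fun p _ => Complex.continuous_normSq.comp ?_
    fun_prop
  have hc0 : normSqVec (c 0) = x j := by rw [← hx j]; simp [c]
  have hc1 : normSqVec (c (Real.pi / 2)) = x l := by rw [← hx l]; simp [c]
  have hivt := intermediate_value_Icc' (show (0 : ℝ) ≤ Real.pi / 2 by positivity) hcont.continuousOn
  rw [hc0, hc1] at hivt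
  obtain ⟨θ, -, hθ⟩ := hivt (show x j - δ ∈ Set.Icc (x l) (x j) from ⟨by linarith, by linarith⟩)
  replace hθ : normSqVec (c θ) = x j - δ := hθ
  have hsc := Real.sin_sq_add_cos_sq θ
  have hpar : normSqVec (c θ) + normSqVec (s θ) = normSqVec (G j) + normSqVec (G l) := by
    simp only [normSqVec, ← sum_add_distrib]
    refine sum_congr rfl fun p _ => ?_
    simp only [c, s, Complex.normSq_apply, Complex.add_re, Complex.add_im, Complex.mul_re,
      Complex.mul_im, Complex.ofReal_re, Complex.ofReal_im, Complex.neg_re, Complex.neg_im]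
    linear_combination ((G j p).re ^ 2 + (G j p).im ^ 2 + (G l p).re ^ 2 + (G l p).im ^ 2) * hsc
  refine ⟨fun i => if i = j then c θ else if i = l then s θ else G i, ?_, ?_⟩
  · rw [← hG, frameOp, frameOp]
    have e : ∀ i, Matrix.vecMulVec (if i = j then c θ else if i = l then s θ else G i)
        (star (if i = j then c θ else if i = l then s θ else G i)) =
        Matrix.vecMulVec (G i) (star (G i)) +
        ((if i = j then Matrix.vecMulVec (c θ) (star (c θ)) - Matrix.vecMulVec (G j) (star (G j))
          else 0) +
        (if i = l then Matrix.vecMulVec (s θ) (star (s θ)) - Matrix.vecMulVec (G l) (star (G l))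
          else 0)) := by
      intro i
      by_cases h1 : i = j
      · subst h1; simp [hjl]
      · by_cases h2 : i = l
        · subst h2; simp [h1]
        · simp [h1, h2]
    simp only [e]
    rw [sum_add_distrib, sum_add_distrib, sum_ite_eq', sum_ite_eq']
    simp only [mem_univ, if_true]
    rw [add_eq_left]
    have hsc' : (Real.sin θ : ℂ) ^ 2 + (Real.cos θ : ℂ) ^ 2 = 1 := by exact_mod_cast hsc
    ext p q
    simp only [Matrix.add_apply, Matrix.sub_apply, Matrix.vecMulVec_apply, Pi.star_apply, c, s,
      Matrix.zero_apply, star_add, star_mul', star_neg, Complex.star_def, Complex.conj_ofReal]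
    linear_combination (G j p * (starRingEnd ℂ) (G j q) + G l p * (starRingEnd ℂ) (G l q)) * hsc'
  · intro i
    by_cases h1 : i = j
    · subst h1; simp [hθ]
    · by_cases h2 : i = l
      · subst h2
        simp only [h1, if_false, if_true]
        rw [hθ, hx, hx] at hpar
        linarith
      · simp [h1, h2, hx]

/-- Realization of an optimal completion. -/
lemma realize (S : Matrix (Fin d) (Fin d) ℂ) (hS : S.IsHermitian) (a : Fin k → ℝ)
    (ha : Antitone a) (hk : k ≤ d) (μ : Fin d → ℝ) (hμ : μ ∈ relaxedSet (pad a d))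
    (hμ0 : ∀ i : Fin d, k ≤ (i : ℕ) → μ i = 0) :
    ∃ G : Fin k → Fin d → ℂ, (∀ i, normSqVec (G i) = a i) ∧
      sortDesc (fun i => eigsAsc S i + μ i) = eigsDesc (S + frameOp G) := by
  obtain ⟨U, hU, hU'⟩ := exists_diag_asc S hS
  have hpad : μ = pad (fun i : Fin k => μ (Fin.castLE hk i)) d := by
    ext i
    by_cases h : (i : ℕ) < k
    · simp [pad, h]
    · simp [pad, h, hμ0 i (not_lt.mp h)]
  set G₀ : Fin k → Fin d → ℂ := fun l p => (Real.sqrt (μ (Fin.castLE hk l)) : ℂ) * U p (Fin.castLE hk l)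
    with hG₀
  have hfr : frameOp G₀ = U * rdiag μ * Uᴴ := by
    ext p q
    rw [conj_rdiag_apply, frameOp, Matrix.sum_apply]
    have h1 : ∑ i : Fin d, U p i * (μ i : ℂ) * star (U q i) =
        ∑ i ∈ univ.map (Fin.castLEEmb hk), U p i * (μ i : ℂ) * star (U q i) := by
      symm
      refine sum_subset (subset_univ _) fun i _ hi => ?_
      rw [hμ0 i]
      · simp
      · by_contra hc
        rw [not_le] at hc
        exact hi (mem_map.mpr ⟨⟨i, hc⟩, mem_univ _, by ext; simp⟩)
    rw [h1, sum_map]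
    refine sum_congr rfl fun l _ => ?_
    simp only [hG₀, Matrix.vecMulVec_apply, Pi.star_apply, star_mul', Complex.star_def,
      Complex.conj_ofReal, Fin.castLEEmb_apply]
    have := Real.mul_self_sqrt (hμ.1 (Fin.castLE hk l))
    have h2 : (Real.sqrt (μ (Fin.castLE hk l)) : ℂ) * (Real.sqrt (μ (Fin.castLE hk l)) : ℂ) =
      (μ (Fin.castLE hk l) : ℂ) := by exact_mod_cast this
    rw [← h2]; ring
  have hnorm : ∀ l, normSqVec (G₀ l) = μ (Fin.castLE hk l) := by
    intro l
    have hcol : ∑ p, Complex.normSq (U p (Fin.castLE hk l)) = 1 := by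
      have := congrFun (congrFun hU (Fin.castLE hk l)) (Fin.castLE hk l)
      rw [Matrix.mul_apply, Matrix.one_apply_eq] at this
      apply Complex.ofReal_injective
      push_cast
      rw [← this]
      refine sum_congr rfl fun p _ => ?_
      rw [Complex.normSq_eq_conj_mul_self]; rfl
    simp only [normSqVec, hG₀, Complex.normSq_mul, Complex.normSq_ofReal]
    rw [← mul_sum, hcol, mul_one, Real.mul_self_sqrt (hμ.1 _)]
  have hp : ∀ j : Fin k, ∑ i ∈ Iic j, a i ≤ ∑ i ∈ Iic j, μ (Fin.castLE hk i) := by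
    intro j
    have h1 := hμ.2.1 (Fin.castLE hk j)
    rw [hpad, sum_Iic_eq, sum_Iic_eq, sum_pad _ hk, sum_pad _ hk] at h1
    rw [sum_Iic_eq, sum_Iic_eq]
    simpa using h1
  have hs : ∑ i, a i = ∑ i : Fin k, μ (Fin.castLE hk i) := by
    have h1 := hμ.2.2
    rw [hpad, sum_pad_all _ hk, sum_pad_all _ hk] at h1
    exact h1.symm
  obtain ⟨G, hG1, hG2⟩ := schur_horn _ a _ ha hp hs G₀ hfr hnorm
  refine ⟨G, hG2, ?_⟩
  rw [hG1]
  conv_rhs => rw [hU', conj_rdiag_add, eigsDesc_conj U hU]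

end Frames
section GammaSets
variable {d k : ℕ}

lemma pad_self (x : Fin d → ℝ) : pad x d = x := by
  ext i; simp [pad]

lemma pad_antitone (a : Fin k → ℝ) (ha : Antitone a) (h0 : ∀ i, 0 ≤ a i) : Antitone (pad a d) := by
  intro i j hij
  have hij' : (i : ℕ) ≤ (j : ℕ) := hij
  simp only [pad]
  by_cases h1 : (j : ℕ) < k
  · have h2 : (i : ℕ) < k := by omega
    simp only [h1, h2, dif_pos]
    exact ha (Fin.mk_le_mk.mpr hij')
  · simp only [h1, dif_neg, not_false_eq_true]
    split_ifs
    · exact h0 _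
    · exact le_rfl

lemma mem_Gamma_iff (a : Fin k → ℝ) (ha : Antitone a) (h0 : ∀ i, 0 ≤ a i) (hk : k ≤ d)
    (μ : Fin d → ℝ) : μ ∈ Gamma d a ↔ Antitone μ ∧ μ ∈ relaxedSet (pad a d) := by
  have hmax : max k d = d := max_eq_right hk
  have key : Antitone μ → (MajorizedByPad a μ ↔
      (∀ j, ∑ i ∈ Iic j, pad a d i ≤ ∑ i ∈ Iic j, μ i) ∧ ∑ i, μ i = ∑ i, pad a d i) := by
    intro hμ
    unfold MajorizedByPad
    rw [hmax, pad_self, MajorizedBy, sortDesc_of_antitone _ (pad_antitone a ha h0),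
      sortDesc_of_antitone _ hμ, eq_comm (a := ∑ i, pad a d i)]
  constructor
  · rintro ⟨h1, h2, h3⟩
    exact ⟨h1, h2, (key h1).mp h3⟩
  · rintro ⟨h1, h2, h3⟩
    exact ⟨h1, h2, (key h1).mpr h3⟩

lemma relaxed_zero (a : Fin k → ℝ) (hk : k ≤ d) (μ : Fin d → ℝ)
    (hμ : μ ∈ relaxedSet (pad a d)) (i : Fin d) (hi : k ≤ (i : ℕ)) : μ i = 0 := by
  refine le_antisymm ?_ (hμ.1 i)
  have htot := hμ.2.2
  by_cases hi0 : (i : ℕ) = 0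
  · have hk0 : k = 0 := by omega
    subst hk0
    rw [sum_pad_all a hk] at htot
    simp only [univ_eq_empty, sum_empty] at htot
    rw [← htot]
    exact single_le_sum (fun i _ => hμ.1 i) (mem_univ i)
  · have hlt : (i : ℕ) - 1 < d := by have := i.2; omega
    have hpre := hμ.2.1 ⟨(i : ℕ) - 1, hlt⟩
    have e : ∑ p ∈ Iic (⟨(i : ℕ) - 1, hlt⟩ : Fin d), pad a d p = ∑ p, pad a d p := by
      rw [sum_Iic_eq, sum_pad a hk, sum_pad_all a hk]
      refine sum_congr rfl fun p _ => if_pos ?_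
      have := p.2
      show (p : ℕ) ≤ (i : ℕ) - 1
      omega
    rw [e, ← htot] at hpre
    have hnot : i ∉ Iic (⟨(i : ℕ) - 1, hlt⟩ : Fin d) := by
      rw [mem_Iic, Fin.le_def]
      show ¬ ((i : ℕ) ≤ (i : ℕ) - 1)
      omega
    have h2 : ∑ p ∈ insert i (Iic (⟨(i : ℕ) - 1, hlt⟩ : Fin d)), μ p ≤ ∑ p, μ p :=
      sum_le_sum_of_subset_of_nonneg (subset_univ _) fun p _ _ => hμ.1 p
    rw [sum_insert hnot] at h2
    linarith

lemma eq_pad_of_zero (hk : k ≤ d) (μ : Fin d → ℝ) (h : ∀ i : Fin d, k ≤ (i : ℕ) → μ i = 0) :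
    μ = pad (fun i : Fin k => μ (Fin.castLE hk i)) d := by
  ext i
  by_cases h1 : (i : ℕ) < k
  · simp [pad, h1]
  · simp [pad, h1, h i (not_lt.mp h1)]

lemma pad_mem_Gamma (a : Fin k → ℝ) (ha : Antitone a) (h0 : ∀ i, 0 ≤ a i) (hk : k ≤ d)
    (μ : Fin k → ℝ) (hμ : μ ∈ Gamma k a) : pad μ d ∈ Gamma d a := by
  rw [mem_Gamma_iff a ha h0 le_rfl, pad_self] at hμ
  rw [mem_Gamma_iff a ha h0 hk]
  obtain ⟨hanti, hnn, hpre, htot⟩ := hμ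
  refine ⟨pad_antitone μ hanti hnn, fun i => ?_, fun j => ?_, ?_⟩
  · simp only [pad]
    split_ifs
    · exact hnn _
    · exact le_rfl
  · rw [sum_Iic_eq, sum_Iic_eq, sum_pad _ hk, sum_pad _ hk]
    by_cases hj : (j : ℕ) < k
    · have := hpre ⟨j, hj⟩
      rw [sum_Iic_eq, sum_Iic_eq] at this
      exact this
    · have e : ∀ p : Fin k, (p : ℕ) ≤ (j : ℕ) := fun p => by have := p.2; omega
      simp only [e, if_true]
      exact htot.ge
  · rw [sum_pad_all _ hk, sum_pad_all _ hk, htot]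

lemma restrict_mem_Gamma (a : Fin k → ℝ) (ha : Antitone a) (h0 : ∀ i, 0 ≤ a i) (hk : k ≤ d)
    (γ : Fin d → ℝ) (hγ : γ ∈ Gamma d a) : (fun i : Fin k => γ (Fin.castLE hk i)) ∈ Gamma k a := by
  rw [mem_Gamma_iff a ha h0 hk] at hγ
  rw [mem_Gamma_iff a ha h0 le_rfl, pad_self]
  have hpad := eq_pad_of_zero hk γ (relaxed_zero a hk γ hγ.2)
  obtain ⟨hanti, hnn, hpre, htot⟩ := hγ
  refine ⟨fun i j hij => hanti hij, fun i => hnn _, fun j => ?_, ?_⟩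
  · have h1 := hpre (Fin.castLE hk j)
    rw [hpad, sum_Iic_eq, sum_Iic_eq, sum_pad _ hk, sum_pad _ hk] at h1
    rw [sum_Iic_eq, sum_Iic_eq]
    simpa using h1
  · rw [hpad, sum_pad_all _ hk, sum_pad_all _ hk] at htot
    exact htot

lemma sum_split (hk : k ≤ d) (F : Fin d → ℝ) :
    ∑ i, F i = ∑ i : Fin k, F (Fin.castLE hk i) + ∑ i : Fin d, if k ≤ (i : ℕ) then F i else 0 := by
  rw [← sum_filter, ← sum_filter_add_sum_filter_not univ (fun i : Fin d => (i : ℕ) < k) F]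
  congr 1
  · have e : ∑ i : Fin k, F (Fin.castLE hk i) = ∑ i ∈ univ.map (Fin.castLEEmb hk), F i := by
      rw [sum_map]; rfl
    rw [e]
    refine sum_congr ?_ fun _ _ => rfl
    apply Finset.ext
    intro i
    rw [mem_filter, mem_map]
    constructor
    · rintro ⟨-, h⟩
      exact ⟨⟨i, h⟩, mem_univ _, by ext; simp⟩
    · rintro ⟨l, -, rfl⟩
      exact ⟨mem_univ _, by simp⟩
  · refine sum_congr ?_ fun _ _ => rfl
    apply Finset.ext
    intro i
    rw [mem_filter, mem_filter, not_lt]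

lemma sum_pad_f (hk : k ≤ d) (f : ℝ → ℝ) (lam : Fin d → ℝ) (μ : Fin k → ℝ) :
    ∑ i, f (lam i + pad μ d i) = ∑ i : Fin k, f (lam (Fin.castLE hk i) + μ i) +
      ∑ i : Fin d, if k ≤ (i : ℕ) then f (lam i) else 0 := by
  rw [sum_split hk]
  congr 1
  · refine sum_congr rfl fun i _ => ?_
    simp [pad]
  · refine sum_congr rfl fun i _ => ?_
    split_ifs with h
    · simp [pad, not_lt.mpr h]
    · rfl

lemma minimizer_unique (lam : Fin d → ℝ) (hlam : ∀ i, 0 ≤ lam i) (a : Fin k → ℝ)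
    (ha : Antitone a) (h0 : ∀ i, 0 ≤ a i) (hk : k ≤ d) (μ₀ : Fin d → ℝ)
    (hμ₀ : μ₀ ∈ relaxedSet (pad a d)) (hanti : Antitone μ₀)
    (hmaj : ∀ γ ∈ relaxedSet (pad a d),
      MajorizedBy (fun i => lam i + μ₀ i) (fun i => lam i + γ i))
    (f : ℝ → ℝ) (hf : StrictConvexOn ℝ (Set.Ici 0) f) (μ : Fin d → ℝ) (hμ : μ ∈ Gamma d a)
    (hmin : ∀ γ ∈ Gamma d a, ∑ i, f (lam i + μ i) ≤ ∑ i, f (lam i + γ i)) : μ = μ₀ := by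
  rw [mem_Gamma_iff a ha h0 hk] at hμ
  have hkar : ∑ i, f (lam i + μ₀ i) ≤ ∑ i, f (lam i + μ i) :=
    karamata f hf.convexOn _ _ (fun i => add_nonneg (hlam i) (hμ.2.1 i)) (hmaj μ hμ.2)
  by_contra hne
  obtain ⟨i₀, hi₀⟩ := Function.ne_iff.mp hne
  set γ : Fin d → ℝ := fun i => (1 / 2 : ℝ) * μ i + (1 / 2 : ℝ) * μ₀ i with hγdef
  have hγ : γ ∈ Gamma d a := by
    rw [mem_Gamma_iff a ha h0 hk]
    refine ⟨fun i j hij => ?_, fun i => ?_, fun j => ?_, ?_⟩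
    · have h1 := hμ.1 hij
      have h2 := hanti hij
      simp only [hγdef]; linarith
    · have h1 := hμ.2.1 i
      have h2 := hμ₀.1 i
      simp only [hγdef]; linarith
    · have h1 := hμ.2.2.1 j
      have h2 := hμ₀.2.1 j
      simp only [hγdef]; rw [sum_add_distrib, ← mul_sum, ← mul_sum]; linarith
    · have h1 := hμ.2.2.2
      have h2 := hμ₀.2.2
      simp only [hγdef]; rw [sum_add_distrib, ← mul_sum, ← mul_sum]; linarith
  have hval := hmin γ hγ
  have hform : ∀ i, lam i + γ i = (1 / 2 : ℝ) • (lam i + μ i) + (1 / 2 : ℝ) • (lam i + μ₀ i) := by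
    intro i; simp only [hγdef, smul_eq_mul]; ring
  have hm1 : ∀ i, lam i + μ i ∈ Set.Ici (0 : ℝ) := fun i => add_nonneg (hlam i) (hμ.2.1 i)
  have hm2 : ∀ i, lam i + μ₀ i ∈ Set.Ici (0 : ℝ) := fun i => add_nonneg (hlam i) (hμ₀.1 i)
  have hlt : ∑ i, f (lam i + γ i) <
      ∑ i, ((1 / 2 : ℝ) * f (lam i + μ i) + (1 / 2 : ℝ) * f (lam i + μ₀ i)) := by
    refine sum_lt_sum (fun i _ => ?_) ⟨i₀, mem_univ _, ?_⟩
    · rw [hform i]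
      exact hf.convexOn.2 (hm1 i) (hm2 i) (by norm_num) (by norm_num) (by norm_num)
    · rw [hform i₀]
      exact hf.2 (hm1 i₀) (hm2 i₀) (fun h => hi₀ (add_left_cancel h)) (by norm_num) (by norm_num)
        (by norm_num)
  rw [sum_add_distrib, ← mul_sum, ← mul_sum] at hlt
  linarith

end GammaSets

theorem stmt_15 {d n₀ k : ℕ} (F₀ : Fin n₀ → Fin d → ℂ) (a : Fin k → ℝ)
    (ha_pos : ∀ i, 0 < a i) (ha_mono : Antitone a)
    (hk1 : d - (frameOp F₀).rank ≤ k) (hk2 : k < d) :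
    (∀ f : ℝ → ℝ, StrictConvexOn ℝ (Set.Ici 0) f → (∀ x ∈ Set.Ici (0 : ℝ), 0 ≤ f x) →
      ∀ μf ∈ Gamma d a,
        (∀ γ ∈ Gamma d a, ∑ i, f (eigsAsc (frameOp F₀) i + μf i) ≤
            ∑ i, f (eigsAsc (frameOp F₀) i + γ i)) →
        ∀ μ'f ∈ Gamma k a,
          (∀ γ ∈ Gamma k a,
              ∑ i : Fin k, f (eigsAsc (frameOp F₀) (Fin.castLE hk2.le i) + μ'f i) ≤
                ∑ i : Fin k, f (eigsAsc (frameOp F₀) (Fin.castLE hk2.le i) + γ i)) →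
          ∀ i : Fin d, eigsAsc (frameOp F₀) i + μf i =
            if h : (i : ℕ) < k then
              eigsAsc (frameOp F₀) (Fin.castLE hk2.le ⟨(i : ℕ), h⟩) + μ'f ⟨(i : ℕ), h⟩
            else eigsAsc (frameOp F₀) i) ∧
    ∃ ν : Fin d → ℝ,
      (∀ f : ℝ → ℝ, StrictConvexOn ℝ (Set.Ici 0) f → (∀ x ∈ Set.Ici (0 : ℝ), 0 ≤ f x) →
        ∀ μf ∈ Gamma d a,
          (∀ γ ∈ Gamma d a, ∑ i, f (eigsAsc (frameOp F₀) i + μf i) ≤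
              ∑ i, f (eigsAsc (frameOp F₀) i + γ i)) →
          (fun i => eigsAsc (frameOp F₀) i + μf i) = ν) ∧
      sortDesc ν ∈ {x : Fin d → ℝ | ∃ G : Fin k → Fin d → ℂ,
          (∀ i, normSqVec (G i) = a i) ∧ x = eigsDesc (frameOp F₀ + frameOp G)} ∧
      ∀ G : Fin k → Fin d → ℂ, (∀ i, normSqVec (G i) = a i) →
        MajorizedBy (sortDesc ν) (eigsDesc (frameOp F₀ + frameOp G)) := by
  have hS := frameOp_posSemidef F₀
  have h0 : ∀ i, 0 ≤ a i := fun i => (ha_pos i).le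
  have hk : k ≤ d := hk2.le
  have hpad0 : ∀ i, 0 ≤ pad a d i := by
    intro i
    simp only [pad]
    split_ifs
    · exact h0 _
    · exact le_rfl
  obtain ⟨μ₀, hμ₀, hanti, hmaj⟩ := exists_optimal (eigsAsc (frameOp F₀)) (pad a d)
    (eigsAsc_monotone _) hpad0
  have huniq := minimizer_unique (eigsAsc (frameOp F₀)) (eigsAsc_nonneg _ hS) a ha_mono h0 hk μ₀
    hμ₀ hanti hmaj
  refine ⟨?_, fun i => eigsAsc (frameOp F₀) i + μ₀ i, ?_, ?_, ?_⟩
  · intro f hf _ μf hμf hmin μ' hμ' hmin' i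
    have h1 := huniq f hf μf hμf hmin
    have h2 := huniq f hf (pad μ' d) (pad_mem_Gamma a ha_mono h0 hk μ' hμ') (by
      intro γ hγ
      have hγ0 := relaxed_zero a hk γ ((mem_Gamma_iff a ha_mono h0 hk γ).mp hγ).2
      rw [eq_pad_of_zero hk γ hγ0, sum_pad_f hk, sum_pad_f hk]
      exact add_le_add_left (hmin' _ (restrict_mem_Gamma a ha_mono h0 hk γ hγ)) _)
    rw [h1, ← h2]
    by_cases h : (i : ℕ) < k
    · rw [dif_pos h]
      simp [pad, h]
    · rw [dif_neg h]
      simp [pad, h]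
  · intro f hf _ μf hμf hmin
    rw [huniq f hf μf hμf hmin]
  · exact realize (frameOp F₀) hS.1 a ha_mono hk μ₀ hμ₀ (relaxed_zero a hk μ₀ hμ₀)
  · intro G hG
    have h1 := majorizedBy_sort _ _ (majorizedBy_trans
      (hmaj _ (frame_mem_relaxed a hk G hG))
      (lidskii _ _ hS.1 (frameOp_posSemidef G).1))
    rwa [sortDesc_of_antitone _ (eigsDesc_antitone (frameOp F₀ + frameOp G))] at h1
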